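/- Let Ω ⊆ ℝ^n be an open set and ξ : Ω → ℝ^n a smooth map with components ξ_1, …, ξ_n. Consider the random system f_k(x) = c_{k,0} + c_{k,1} ξ_k(x), k = 1, …, n, where the c_{k,i} are i.i.d. standard Gaussian random variables. Then for every Borel measurable set Ω̃ ⊆ Ω, the expected number of regular zeros satisfies E_c #Z_r(f, Ω̃) = π^{-n} ∫_{Ω̃} |det D_x ξ| / ∏_{k=1}^n (1 + ξ_k(x)^2) dx, where D_x ξ is the Jacobian matrix of ξ at x and the integral is with respect to Lebesgue measure. -/

import Mathlib

/-!
A zero of `c_{k,0} + c_{k,1} ξ_k` is, as soon as all `c_{k,1}` are nonzero (an almost sure event),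
a point of the fibre of `ξ` over `y`, where `y_k = -c_{k,0} / c_{k,1}`; since the derivative of the
system is `D ξ` followed by an invertible diagonal map, the zero is regular exactly when
`det D ξ ≠ 0`. So the number of regular zeros in `Ωt` is `N y`, with `N y` the cardinality of the
fibre over `y` of the restriction of `ξ` to `A = {x ∈ Ωt | det D_x ξ ≠ 0}`.

The ratio of two independent standard Gaussians is a standard Cauchy variable
(`map_neg_div_gaussian`), so `y` has density `∏ k, π⁻¹ (1 + y_k ^ 2)⁻¹` (`pi_cauchyMeasure`).
The area formula (`lintegral_mul_encard_fibre`) turns the integral of `N` against this density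
into the integral of `|det D ξ| ∏ k, π⁻¹ (1 + ξ_k ^ 2)⁻¹` over `A`, and the integrand
vanishes on `Ωt \ A`. For the area formula, `A` splits into countably many measurable pieces on
which `ξ` is close to a fixed invertible linear map, hence injective; on each piece it is the
usual change of variables.
-/

open MeasureTheory ProbabilityTheory

/-- The random system `f_k(x) = c_{k,0} + c_{k,1} ξ_k(x)`. -/
noncomputable def riceSystem {n : ℕ} (ξ : (Fin n → ℝ) → (Fin n → ℝ))
    (c : Fin n → Fin 2 → ℝ) (x : Fin n → ℝ) : Fin n → ℝ :=
  fun k => c k 0 + c k 1 * ξ x k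

/-! ### The area formula on regular points -/

/-- A map close enough to an invertible linear map `A` is injective. For singular `A` the radius is
arbitrary: a radius is attached to every linear map because the partition theorem for
differentiable maps asks for a function defined on all of them. -/
theorem exists_injOn_of_approximates {n : ℕ} (A : (Fin n → ℝ) →L[ℝ] (Fin n → ℝ)) :
    ∃ r : NNReal, r ≠ 0 ∧ (A.det ≠ 0 → ∀ (f : (Fin n → ℝ) → (Fin n → ℝ)) (s : Set (Fin n → ℝ)),
      ApproximatesLinearOn f A s r → Set.InjOn f s) := by
  by_cases hA : A.det = 0
  · exact ⟨1, one_ne_zero, fun h => absurd hA h⟩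
  · let e := A.toContinuousLinearEquivOfDetNeZero hA
    have he : (e : (Fin n → ℝ) →L[ℝ] (Fin n → ℝ)) = A :=
      A.coe_toContinuousLinearEquivOfDetNeZero hA
    rcases e.subsingleton_or_nnnorm_symm_pos with hs | hpos
    · exact ⟨1, one_ne_zero, fun _ f s _ => fun x _ y _ _ => Subsingleton.elim x y⟩
    · refine ⟨‖(e.symm : (Fin n → ℝ) →L[ℝ] (Fin n → ℝ))‖₊⁻¹ / 2, by positivity, ?_⟩
      intro _ f s h
      rw [← he] at h
      exact h.injOn (Or.inr (NNReal.half_lt_self (ne_of_gt (inv_pos.2 hpos))))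

theorem exists_partition_injOn {n : ℕ} {f : (Fin n → ℝ) → (Fin n → ℝ)}
    {f' : (Fin n → ℝ) → (Fin n → ℝ) →L[ℝ] (Fin n → ℝ)} {A : Set (Fin n → ℝ)}
    (hA : MeasurableSet A) (hf : ∀ x ∈ A, HasFDerivWithinAt f (f' x) A x)
    (hdet : ∀ x ∈ A, (f' x).det ≠ 0) :
    ∃ B : ℕ → Set (Fin n → ℝ), (∀ i, MeasurableSet (B i)) ∧ Pairwise (Function.onFun Disjoint B) ∧
      ⋃ i, B i = A ∧ ∀ i, Set.InjOn f (B i) := by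
  choose r hr hinj using exists_injOn_of_approximates (n := n)
  obtain ⟨t, L, hd, hm, hc, happ, hL⟩ :=
    exists_partition_approximatesLinearOn_of_hasFDerivWithinAt f A f' hf r hr
  refine ⟨fun i => A ∩ t i, fun i => hA.inter (hm i), fun i j hij => ?_, ?_, fun i => ?_⟩
  · exact (hd hij).mono Set.inter_subset_right Set.inter_subset_right
  · rw [← Set.inter_iUnion]
    exact Set.inter_eq_left.2 hc
  · rcases A.eq_empty_or_nonempty with h | h
    · simp [h]
    · obtain ⟨y, hy, hyL⟩ := hL h i
      exact hinj (L i) (hyL ▸ hdet y hy) f _ (happ i)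

/-- The fibre of `f` over `y` meets each piece of a partition into sets of injectivity in at most
one point, and it does so exactly when `y` lies in the image of that piece. -/
theorem encard_fibre_eq_tsum {α β : Type*} {f : α → β} {A : Set α} {B : ℕ → Set α}
    (hd : Pairwise (Function.onFun Disjoint B)) (hU : ⋃ i, B i = A)
    (hinj : ∀ i, Set.InjOn f (B i)) (y : β) :
    (({x | x ∈ A ∧ f x = y}.encard : ENat) : ENNReal) = ∑' i, (f '' B i).indicator 1 y := by
  have key : ∀ i, (f '' B i).indicator (1 : β → ENNReal) y
      = ∑' x : α, {x | x ∈ B i ∧ f x = y}.indicator (1 : α → ENNReal) x := by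
    intro i
    by_cases h : y ∈ f '' B i
    · obtain ⟨x, hx, rfl⟩ := h
      rw [Set.indicator_of_mem (Set.mem_image_of_mem f hx), tsum_eq_single x]
      · simp [hx]
      · intro z hz
        exact Set.indicator_of_notMem (fun hz' => hz (hinj i hz'.1 hx hz'.2)) _
    · rw [Set.indicator_of_notMem h, eq_comm, ENNReal.tsum_eq_zero]
      exact fun x => Set.indicator_of_notMem (fun hx => h ⟨x, hx.1, hx.2⟩) _
  simp_rw [key]
  rw [ENNReal.tsum_comm, ← ENNReal.tsum_set_one, tsum_subtype _ (fun _ => (1 : ENNReal))]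
  refine tsum_congr fun x => ?_
  by_cases h : x ∈ A ∧ f x = y
  · rw [Set.indicator_of_mem (by exact h)]
    obtain ⟨i, hi⟩ := Set.mem_iUnion.1 (hU ▸ h.1)
    rw [tsum_eq_single i]
    · simp [hi, h.2]
    · intro j hj
      exact Set.indicator_of_notMem
        (fun hx => Set.disjoint_left.1 (hd hj) hx.1 hi) _
  · rw [Set.indicator_of_notMem (by exact h), eq_comm, ENNReal.tsum_eq_zero]
    exact fun i => Set.indicator_of_notMem
      (fun hx => h ⟨hU ▸ Set.mem_iUnion.2 ⟨i, hx.1⟩, hx.2⟩) _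

/-- The area formula on a set of regular points, together with the measurability of the
multiplicity function. -/
theorem lintegral_mul_encard_fibre {n : ℕ} {f : (Fin n → ℝ) → (Fin n → ℝ)}
    {f' : (Fin n → ℝ) → (Fin n → ℝ) →L[ℝ] (Fin n → ℝ)} {A : Set (Fin n → ℝ)}
    (hA : MeasurableSet A) (hf : ∀ x ∈ A, HasFDerivWithinAt f (f' x) A x)
    (hdet : ∀ x ∈ A, (f' x).det ≠ 0) :
    Measurable (fun y => (({x | x ∈ A ∧ f x = y}.encard : ENat) : ENNReal)) ∧
    ∀ g : (Fin n → ℝ) → ENNReal, Measurable g →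
      ∫⁻ y, g y * (({x | x ∈ A ∧ f x = y}.encard : ENat) : ENNReal)
        = ∫⁻ x in A, ENNReal.ofReal |(f' x).det| * g (f x) := by
  obtain ⟨B, hm, hd, hU, hinj⟩ := exists_partition_injOn hA hf hdet
  have hBA : ∀ i, B i ⊆ A := fun i => hU ▸ Set.subset_iUnion B i
  have hfB : ∀ i, ∀ x ∈ B i, HasFDerivWithinAt f (f' x) (B i) x :=
    fun i x hx => (hf x (hBA i hx)).mono (hBA i)
  have him : ∀ i, MeasurableSet (f '' B i) :=
    fun i => measurable_image_of_fderivWithin (hm i) (hfB i) (hinj i)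
  simp_rw [encard_fibre_eq_tsum hd hU hinj]
  refine ⟨Measurable.tsum fun i => measurable_one.indicator (him i), fun g hg => ?_⟩
  simp_rw [← ENNReal.tsum_mul_left]
  have hgm : ∀ i, AEMeasurable (fun y => g y * (f '' B i).indicator 1 y) :=
    fun i => (hg.mul (measurable_one.indicator (him i))).aemeasurable
  rw [lintegral_tsum hgm, ← hU, lintegral_iUnion hm hd]
  refine tsum_congr fun i => ?_
  rw [← lintegral_image_eq_lintegral_abs_det_fderiv_mul volume (hm i) (hfB i) (hinj i),
    ← lintegral_indicator (him i)]
  refine lintegral_congr fun y => ?_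
  by_cases hy : y ∈ f '' B i <;> simp [hy]

/-! ### Ratios of Gaussians -/

/-- The density at `y` of `-a / b`, for `a` and `b` independent standard Gaussians: the factor `|b|`
is the Jacobian of the substitution `a = -b * y`. -/
theorem lintegral_abs_mul_gaussianPDF (y : ℝ) :
    ∫⁻ b, ENNReal.ofReal |b| * (gaussianPDF 0 1 (-b * y) * gaussianPDF 0 1 b)
      = cauchyPDF 0 1 y := by
  have ht : 0 < (1 + y ^ 2) / 2 := by positivity
  have h1 : ∀ b : ℝ, ENNReal.ofReal |b| * (gaussianPDF 0 1 (-b * y) * gaussianPDF 0 1 b)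
      = ENNReal.ofReal ((2 * Real.pi)⁻¹ *
        (|b| * Real.exp (-((1 + y ^ 2) / 2) * |b| ^ 2))) := by
    intro b
    rw [gaussianPDF, gaussianPDF, ← ENNReal.ofReal_mul (gaussianPDFReal_nonneg _ _ _),
      ← ENNReal.ofReal_mul (abs_nonneg _)]
    congr 1
    simp only [gaussianPDFReal, NNReal.coe_one, mul_one, sub_zero]
    have hs : (√(2 * Real.pi))⁻¹ * (√(2 * Real.pi))⁻¹ = (2 * Real.pi)⁻¹ := by
      rw [← mul_inv, Real.mul_self_sqrt (by positivity)]
    have he : Real.exp (-((1 + y ^ 2) / 2) * |b| ^ 2)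
        = Real.exp (-(-b * y) ^ 2 / 2) * Real.exp (-b ^ 2 / 2) := by
      rw [← Real.exp_add, sq_abs]
      congr 1
      ring
    rw [he, ← hs]
    ring
  have hint : Integrable fun b : ℝ => (2 * Real.pi)⁻¹ *
      (|b| * Real.exp (-((1 + y ^ 2) / 2) * |b| ^ 2)) := by
    refine Integrable.const_mul ?_ _
    refine (integrable_mul_exp_neg_mul_sq ht).abs.congr (Filter.Eventually.of_forall fun b => ?_)
    simp [abs_mul]
  simp_rw [h1]
  rw [← ofReal_integral_eq_lintegral_ofReal hint
    (Filter.Eventually.of_forall fun b => by positivity), cauchyPDF]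
  congr 1
  rw [integral_const_mul,
    integral_comp_abs (f := fun b => b * Real.exp (-((1 + y ^ 2) / 2) * b ^ 2))]
  have h2 := integral_rpow_mul_exp_neg_mul_rpow (p := 2) (q := 1) two_pos (by norm_num) ht
  norm_num at h2
  have h3 : ∫ b in Set.Ioi (0 : ℝ), b * Real.exp (-((1 + y ^ 2) / 2) * b ^ 2)
      = (1 + y ^ 2)⁻¹ := by
    simp_rw [neg_mul]
    rw [h2, Real.rpow_neg_one]
    field_simp
  rw [h3, cauchyPDFReal_def]
  simp
  field_simp
  ring

/-- The ratio of two independent standard Gaussians is a standard Cauchy variable. -/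
theorem map_neg_div_gaussian :
    (Measure.pi fun _ : Fin 2 => gaussianReal 0 1).map (fun c => -c 0 / c 1)
      = cauchyMeasure 0 1 := by
  have hφ : Measurable (fun p : ℝ × ℝ => -p.1 / p.2) := by fun_prop
  have h := measurePreserving_finTwoArrow (gaussianReal 0 1)
  have h0 : (fun c : Fin 2 → ℝ => -c 0 / c 1)
      = (fun p : ℝ × ℝ => -p.1 / p.2) ∘ MeasurableEquiv.finTwoArrow := by
    ext c; rfl
  rw [h0, ← Measure.map_map hφ MeasurableEquiv.finTwoArrow.measurable, h.map_eq]
  ext s hs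
  have hg : Measurable (gaussianPDF 0 1) := measurable_gaussianPDF 0 1
  have hi : Measurable (s.indicator (1 : ℝ → ENNReal)) := measurable_one.indicator hs
  rw [Measure.map_apply hφ hs, ← lintegral_indicator_one (hφ hs),
    lintegral_prod_symm _ (measurable_one.indicator (hφ hs)).aemeasurable,
    gaussianReal_of_var_ne_zero 0 one_ne_zero,
    lintegral_withDensity_eq_lintegral_mul₀ hg.aemeasurable
      ((measurable_one.indicator (hφ hs)).lintegral_prod_left').aemeasurable]
  -- For fixed `b ≠ 0`, substitute `a = -b y`.
  have key : ∀ b : ℝ, b ≠ 0 →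
      gaussianPDF 0 1 b * ∫⁻ a, ((fun p : ℝ × ℝ => -p.1 / p.2) ⁻¹' s).indicator 1 (a, b)
        ∂(volume.withDensity (gaussianPDF 0 1))
      = ∫⁻ y, s.indicator 1 y *
          (ENNReal.ofReal |b| * (gaussianPDF 0 1 (-b * y) * gaussianPDF 0 1 b)) := by
    intro b hb
    have hm : Measurable fun a : ℝ =>
        ((fun p : ℝ × ℝ => -p.1 / p.2) ⁻¹' s).indicator (1 : ℝ × ℝ → ENNReal) (a, b) :=
      (measurable_one.indicator (hφ hs)).comp measurable_prodMk_right
    rw [lintegral_withDensity_eq_lintegral_mul₀ hg.aemeasurable hm.aemeasurable]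
    have himg : (fun y : ℝ => -b * y) '' Set.univ = Set.univ :=
      Set.image_univ_of_surjective (mul_left_surjective₀ (neg_ne_zero.2 hb))
    have hcv := lintegral_image_eq_lintegral_abs_deriv_mul (f := fun y : ℝ => -b * y)
      (f' := fun _ => -b) MeasurableSet.univ
      (fun x _ => (by simpa using (hasDerivAt_id x).const_mul (-b) :
        HasDerivAt (fun y : ℝ => -b * y) (-b) x).hasDerivWithinAt)
      (mul_right_injective₀ (neg_ne_zero.2 hb)).injOn
      (gaussianPDF 0 1 * fun a => ((fun p : ℝ × ℝ => -p.1 / p.2) ⁻¹' s).indicator 1 (a, b))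
    rw [himg, setLIntegral_univ, setLIntegral_univ] at hcv
    rw [hcv, ← lintegral_const_mul' _ _ (by exact ENNReal.ofReal_ne_top)]
    refine lintegral_congr fun y => ?_
    have hy : -(-b * y) / b = y := by field_simp
    have hind : ((fun p : ℝ × ℝ => -p.1 / p.2) ⁻¹' s).indicator (1 : ℝ × ℝ → ENNReal) (-b * y, b)
        = s.indicator 1 y := by
      have hiff : (-b * y, b) ∈ (fun p : ℝ × ℝ => -p.1 / p.2) ⁻¹' s ↔ y ∈ s := by
        change -(-b * y) / b ∈ s ↔ y ∈ s
        rw [hy]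
      by_cases hys : y ∈ s
      · rw [Set.indicator_of_mem (hiff.2 hys), Set.indicator_of_mem hys]
        rfl
      · rw [Set.indicator_of_notMem (hys ∘ hiff.1), Set.indicator_of_notMem hys]
    simp only [Pi.mul_apply, hind, abs_neg]
    ring
  have hae : ∀ᵐ b : ℝ, b ≠ 0 := by simp [ae_iff]
  simp only [Pi.mul_apply]
  rw [lintegral_congr_ae (hae.mono fun b hb => key b hb), lintegral_lintegral_swap]
  · have hin : ∀ y : ℝ, ∫⁻ b, s.indicator 1 y *
          (ENNReal.ofReal |b| * (gaussianPDF 0 1 (-b * y) * gaussianPDF 0 1 b))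
        = s.indicator (cauchyPDF 0 1) y := by
      intro y
      rw [lintegral_const_mul _ (by fun_prop), lintegral_abs_mul_gaussianPDF]
      by_cases hy : y ∈ s <;> simp [hy]
    simp_rw [hin]
    rw [lintegral_indicator hs, cauchyMeasure_of_scale_ne_zero 0 one_ne_zero, withDensity_apply _ hs]
  · refine Measurable.aemeasurable ?_
    have hsnd : Measurable fun p : ℝ × ℝ => s.indicator (1 : ℝ → ENNReal) p.2 :=
      hi.comp measurable_snd
    simp only [Function.uncurry_def]
    exact hsnd.mul (by fun_prop)

theorem pi_cauchyMeasure (n : ℕ) :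
    (Measure.pi fun _ : Fin n => cauchyMeasure 0 1)
      = (volume : Measure (Fin n → ℝ)).withDensity
        fun y => ENNReal.ofReal (∏ k, cauchyPDFReal 0 1 (y k)) := by
  refine Measure.pi_eq fun s hs => ?_
  have hpos : ∀ x, 0 ≤ cauchyPDFReal 0 1 x := fun x => (cauchyPDF_pos 0 one_ne_zero x).le
  have hint : ∀ k, Integrable (cauchyPDFReal 0 1) (volume.restrict (s k)) :=
    fun k => (integrable_cauchyPDFReal 0).restrict
  rw [withDensity_apply _ (MeasurableSet.univ_pi hs), volume_pi, Measure.restrict_pi_pi,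
    ← ofReal_integral_eq_lintegral_ofReal
      (Integrable.fintype_prod (f := fun _ => cauchyPDFReal 0 1) hint)
      (Filter.Eventually.of_forall fun y => Finset.prod_nonneg fun k _ => hpos _),
    integral_fintype_prod_eq_prod (fun _ => cauchyPDFReal 0 1),
    ENNReal.ofReal_prod_of_nonneg fun k _ => integral_nonneg hpos]
  refine Finset.prod_congr rfl fun k _ => ?_
  rw [ofReal_integral_eq_lintegral_ofReal (hint k) (Filter.Eventually.of_forall hpos),
    cauchyMeasure_of_scale_ne_zero 0 one_ne_zero, withDensity_apply _ (hs k)]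
  rfl

/-! ### Regular zeros of the random system -/

theorem bijective_iff_det_ne_zero {n : ℕ} (L : (Fin n → ℝ) →L[ℝ] (Fin n → ℝ)) :
    Function.Bijective L ↔ L.det ≠ 0 := by
  rw [ContinuousLinearMap.det, ← isUnit_iff_ne_zero, ← LinearMap.isUnit_iff_isUnit_det,
    Module.End.isUnit_iff]
  rfl

/-- When no `c k 1` vanishes, the derivative of the system is an invertible diagonal map composed
with that of `ξ`. -/
theorem bijective_fderiv_riceSystem_iff {n : ℕ} {ξ : (Fin n → ℝ) → (Fin n → ℝ)}
    {c : Fin n → Fin 2 → ℝ} (hc : ∀ k, c k 1 ≠ 0) {x : Fin n → ℝ}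
    (hξ : DifferentiableAt ℝ ξ x) :
    Function.Bijective (fderiv ℝ (riceSystem ξ c) x) ↔ (fderiv ℝ ξ x).det ≠ 0 := by
  let D : (Fin n → ℝ) ≃L[ℝ] (Fin n → ℝ) := ContinuousLinearEquiv.piCongrRight fun k =>
    ContinuousLinearEquiv.unitsEquivAut ℝ (Units.mk0 (c k 1) (hc k))
  have hsys : riceSystem ξ c = fun x => (fun k => c k 0) + D (ξ x) := by
    ext x k
    simp [riceSystem, D, mul_comm]
  have hD := (D.hasFDerivAt.comp x hξ.hasFDerivAt).const_add (fun k => c k 0)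
  have hfd : fderiv ℝ (riceSystem ξ c) x
      = (D : (Fin n → ℝ) →L[ℝ] (Fin n → ℝ)).comp (fderiv ℝ ξ x) := by
    rw [hsys]
    exact hD.fderiv
  rw [hfd, ← bijective_iff_det_ne_zero]
  exact EquivLike.comp_bijective (fderiv ℝ ξ x) D

theorem rice_formula
    (n : ℕ) (Ω : Set (Fin n → ℝ)) (hΩ : IsOpen Ω)
    (ξ : (Fin n → ℝ) → (Fin n → ℝ)) (hξ : ContDiffOn ℝ (⊤ : ℕ∞) ξ Ω)
    (Ωt : Set (Fin n → ℝ)) (hΩt : MeasurableSet Ωt) (hΩtΩ : Ωt ⊆ Ω) :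
    ∫⁻ c, (({x | x ∈ Ωt ∧ riceSystem ξ c x = 0 ∧
          Function.Bijective (fderiv ℝ (riceSystem ξ c) x)}).encard : ENNReal)
        ∂(Measure.pi fun _ : Fin n => Measure.pi fun _ : Fin 2 => gaussianReal 0 1)
      = ((ENNReal.ofReal Real.pi) ^ n)⁻¹
          * ∫⁻ x in Ωt, ENNReal.ofReal
              (|LinearMap.det ((fderiv ℝ ξ x : (Fin n → ℝ) →L[ℝ] (Fin n → ℝ))
                  : (Fin n → ℝ) →ₗ[ℝ] (Fin n → ℝ))|
                / ∏ k, (1 + (ξ x k) ^ 2)) := by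
  have hdiff : ∀ x ∈ Ωt, DifferentiableAt ℝ ξ x := fun x hx =>
    (hξ.differentiableOn (by simp)).differentiableAt (hΩ.mem_nhds (hΩtΩ hx))
  have hdetm : Measurable fun x => (fderiv ℝ ξ x).det :=
    ContinuousLinearMap.continuous_det.measurable.comp (measurable_fderiv ℝ ξ)
  set A : Set (Fin n → ℝ) := Ωt ∩ {x | (fderiv ℝ ξ x).det ≠ 0} with hAdef
  have hS : MeasurableSet {x | (fderiv ℝ ξ x).det ≠ 0} :=
    (hdetm (measurableSet_singleton 0)).compl
  have hA : MeasurableSet A := hΩt.inter hS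
  obtain ⟨hNm, hN⟩ := lintegral_mul_encard_fibre hA
    (fun x hx => (hdiff x hx.1).hasFDerivAt.hasFDerivWithinAt) (fun x hx => hx.2)
  set N : (Fin n → ℝ) → ENNReal := fun y => (({x | x ∈ A ∧ ξ x = y}.encard : ENat) : ENNReal)
    with hNdef
  set P := Measure.pi fun _ : Fin n => Measure.pi fun _ : Fin 2 => gaussianReal 0 1 with hP
  have hne : ∀ᵐ c ∂P, ∀ k, c k 1 ≠ 0 := by
    refine ae_all_iff.2 fun k => ?_
    have h1 : ∀ᵐ a ∂(gaussianReal 0 1), a ≠ 0 := by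
      have := nullSingletonClass_gaussianReal (μ := 0) (one_ne_zero : (1 : NNReal) ≠ 0)
      simp [ae_iff]
    have h2 : ∀ᵐ a ∂(Measure.pi fun _ : Fin 2 => gaussianReal 0 1), a 1 ≠ 0 :=
      (Measure.quasiMeasurePreserving_eval (fun _ : Fin 2 => gaussianReal 0 1) 1).ae h1
    exact (Measure.quasiMeasurePreserving_eval
      (fun _ : Fin n => Measure.pi fun _ : Fin 2 => gaussianReal 0 1) k).ae h2
  have hcount : ∀ c : Fin n → Fin 2 → ℝ, (∀ k, c k 1 ≠ 0) →
      (({x | x ∈ Ωt ∧ riceSystem ξ c x = 0 ∧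
          Function.Bijective (fderiv ℝ (riceSystem ξ c) x)}).encard : ENNReal)
        = N fun k => -c k 0 / c k 1 := by
    intro c hc
    have hset : {x | x ∈ Ωt ∧ riceSystem ξ c x = 0 ∧
        Function.Bijective (fderiv ℝ (riceSystem ξ c) x)}
        = {x | x ∈ A ∧ ξ x = fun k => -c k 0 / c k 1} := by
      ext x
      have hz : riceSystem ξ c x = 0 ↔ ξ x = fun k => -c k 0 / c k 1 := by
        rw [funext_iff, funext_iff]
        refine forall_congr' fun k => ?_
        rw [eq_div_iff (hc k)]
        simp only [riceSystem, Pi.zero_apply]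
        constructor <;> intro h <;> linarith
      simp only [Set.mem_ofPred_eq, hAdef, Set.mem_inter_iff, hz]
      constructor
      · rintro ⟨h1, h2, h3⟩
        exact ⟨⟨h1, (bijective_fderiv_riceSystem_iff hc (hdiff x h1)).1 h3⟩, h2⟩
      · rintro ⟨⟨h1, h3⟩, h2⟩
        exact ⟨h1, h2, (bijective_fderiv_riceSystem_iff hc (hdiff x h1)).2 h3⟩
    rw [hset]
  have hφ : Measurable (fun a : Fin 2 → ℝ => -a 0 / a 1) := by fun_prop
  have hΦ : Measurable (fun (c : Fin n → Fin 2 → ℝ) k => -c k 0 / c k 1) :=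
    measurable_pi_lambda _ fun k => hφ.comp (measurable_pi_apply k)
  have hmap : P.map (fun (c : Fin n → Fin 2 → ℝ) k => -c k 0 / c k 1)
      = Measure.pi fun _ : Fin n => cauchyMeasure 0 1 := by
    have hsf : SigmaFinite ((Measure.pi fun _ : Fin 2 => gaussianReal 0 1).map
        (fun a : Fin 2 → ℝ => -a 0 / a 1)) := by
      rw [map_neg_div_gaussian]; infer_instance
    have := Measure.pi_map_pi (μ := fun _ : Fin n => Measure.pi fun _ : Fin 2 => gaussianReal 0 1)
      (f := fun _ (a : Fin 2 → ℝ) => -a 0 / a 1) (fun _ => hφ.aemeasurable)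
    rw [map_neg_div_gaussian] at this
    exact this
  have hρ : Measurable fun y : Fin n → ℝ => ENNReal.ofReal (∏ k, cauchyPDFReal 0 1 (y k)) := by
    refine ENNReal.measurable_ofReal.comp ?_
    exact Finset.measurable_prod _ fun k _ =>
      (measurable_cauchyPDFReal 0 1).comp (measurable_pi_apply k)
  rw [lintegral_congr_ae (hne.mono fun c hc => hcount c hc), ← lintegral_map hNm hΦ, hmap,
    pi_cauchyMeasure, lintegral_withDensity_eq_lintegral_mul _ hρ hNm]
  simp only [Pi.mul_apply]
  rw [hN _ hρ, ← lintegral_const_mul' _ _ (by simp [Real.pi_pos])]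
  have hpt : ∀ x, ENNReal.ofReal |(fderiv ℝ ξ x).det| *
        ENNReal.ofReal (∏ k, cauchyPDFReal 0 1 (ξ x k))
      = (ENNReal.ofReal Real.pi ^ n)⁻¹ * ENNReal.ofReal
          (|(fderiv ℝ ξ x).det| / ∏ k, (1 + (ξ x k) ^ 2)) := by
    intro x
    rw [← ENNReal.ofReal_pow Real.pi_pos.le, ← ENNReal.ofReal_inv_of_pos (by positivity),
      ← ENNReal.ofReal_mul (abs_nonneg _), ← ENNReal.ofReal_mul (by positivity)]
    congr 1
    simp only [cauchyPDFReal_def, NNReal.coe_one, mul_one, sub_zero, one_pow]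
    rw [Finset.prod_mul_distrib, Finset.prod_const, Finset.card_univ, Fintype.card_fin,
      Finset.prod_inv_distrib, inv_pow]
    simp_rw [add_comm _ (1 : ℝ)]
    ring
  simp_rw [hpt]
  -- The integrand vanishes on `Ωt \ A`.
  rw [← lintegral_indicator hA, ← lintegral_indicator hΩt]
  refine lintegral_congr fun x => ?_
  by_cases hx : x ∈ Ωt
  · by_cases hd : (fderiv ℝ ξ x).det = 0
    · have hxA : x ∉ A := fun h => h.2 hd
      have hd' : LinearMap.det (fderiv ℝ ξ x : (Fin n → ℝ) →ₗ[ℝ] (Fin n → ℝ)) = 0 := hd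
      rw [Set.indicator_of_notMem hxA, Set.indicator_of_mem hx, hd']
      simp
    · have hxA : x ∈ A := ⟨hx, hd⟩
      rw [Set.indicator_of_mem hxA, Set.indicator_of_mem hx]
  · have hxA : x ∉ A := fun h => hx h.1
    rw [Set.indicator_of_notMem hxA, Set.indicator_of_notMem hx]
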